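/- arXiv:1608.02393 — 2 statements merged into one kernel-verified Lean document; each statement's English description precedes it below -/
import Mathlib

section
/- Let X and Y be metric spaces satisfying assumptions (A), let Ω ⊊ X be a bounded domain satisfying the bounded turning condition, and let Ω' ⊊ Y be a bounded domain that is finitely connected at the boundary. Then every homeomorphism f ∈ F(Ω, Ω') extends to a continuous mapping F : closure(Ω) → closure(Ω'), and moreover Ω' ∪ ⋃_{x ∈ ∂Ω} C(f,x) = closure(Ω'). -/
open Set Metric Filter Bornology
open scoped ENNReal Topology

noncomputable section

/-- A metric space is doubling if there is `N` such that every ball of radius `r`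
can be covered by at most `N` balls of radius `r/2`. -/
def DoublingSpace (X : Type*) [MetricSpace X] : Prop :=
  ∃ N : ℕ, ∀ (x : X) (r : ℝ), ∃ t : Finset X,
    t.card ≤ N ∧ Metric.ball x r ⊆ ⋃ y ∈ t, Metric.ball y (r / 2)

/-- A metric space is quasiconvex if there is `C ≥ 1` such that any two points are
joined by a rectifiable curve of length at most `C · d(x,y)`. -/
def QuasiconvexSpace (X : Type*) [MetricSpace X] : Prop :=
  ∃ C : ℝ, 1 ≤ C ∧ ∀ x y : X, ∃ γ : ℝ → X,
    ContinuousOn γ (Set.Icc 0 1) ∧ γ 0 = x ∧ γ 1 = y ∧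
    eVariationOn γ (Set.Icc 0 1) ≤ ENNReal.ofReal (C * dist x y)

/-- Assumptions (A): complete, doubling and quasiconvex. -/
def AssumptionsA (X : Type*) [MetricSpace X] : Prop :=
  CompleteSpace X ∧ DoublingSpace X ∧ QuasiconvexSpace X

/-- A domain: a nonempty open connected subset. -/
def IsDomainIn {X : Type*} [MetricSpace X] (Ω : Set X) : Prop :=
  IsOpen Ω ∧ IsConnected Ω

/-- The inner diameter distance `dist_{M'}` between `E, F ⊆ Ω`: the infimum of diameters of
rectifiable curves in `Ω` joining `E` and `F` (the infimum of the empty set being `∞`). -/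
def innerDiamDist {X : Type*} [MetricSpace X] (Ω E F : Set X) : ℝ≥0∞ :=
  ⨅ (γ : ℝ → X) (_ : ContinuousOn γ (Set.Icc 0 1) ∧ γ '' Set.Icc 0 1 ⊆ Ω ∧
      eVariationOn γ (Set.Icc 0 1) < ⊤ ∧ γ 0 ∈ E ∧ γ 1 ∈ F),
    EMetric.diam (γ '' Set.Icc 0 1)

/-- The Mazurkiewicz distance `dist_M` between `A, B ⊆ Ω`: the infimum of diameters of
connected subsets of `Ω` meeting both `A` and `B`. -/
def mazDist {X : Type*} [MetricSpace X] (Ω A B : Set X) : ℝ≥0∞ :=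
  ⨅ (K : Set X) (_ : K ⊆ Ω ∧ IsConnected K ∧ (K ∩ A).Nonempty ∧ (K ∩ B).Nonempty),
    EMetric.diam K

/-- An acceptable set in a bounded domain `Ω`: a bounded connected proper subset of `Ω`
whose closure meets `∂Ω`. -/
def AcceptableIn {X : Type*} [MetricSpace X] (Ω E : Set X) : Prop :=
  Bornology.IsBounded E ∧ IsConnected E ∧ E ⊆ Ω ∧ E ≠ Ω ∧
    (closure E ∩ frontier Ω).Nonempty

/-- A chain in `Ω`. -/
def IsChainIn {X : Type*} [MetricSpace X] (Ω : Set X) (E : ℕ → Set X) : Prop :=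
  (∀ k, AcceptableIn Ω (E k)) ∧
  (∀ k, E (k + 1) ⊆ E k) ∧
  (∀ k, 0 < mazDist Ω (Ω ∩ frontier (E (k + 1))) (Ω ∩ frontier (E k))) ∧
  (⋂ k, closure (E k)) ⊆ frontier Ω

/-- The impression of a chain. -/
def impression {X : Type*} [MetricSpace X] (E : ℕ → Set X) : Set X :=
  ⋂ k, closure (E k)

/-- A chain `E` divides a chain `F` if every member of `F` contains some member of `E`. -/
def ChainDivides {X : Type*} (E F : ℕ → Set X) : Prop :=
  ∀ k, ∃ l, E l ⊆ F k

/-- Two chains are equivalent if they divide each other. -/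
def ChainEquiv {X : Type*} (E F : ℕ → Set X) : Prop :=
  ChainDivides E F ∧ ChainDivides F E

/-- A chain represents a prime end if every chain dividing it is equivalent to it. -/
def IsPrimeChain {X : Type*} [MetricSpace X] (Ω : Set X) (E : ℕ → Set X) : Prop :=
  IsChainIn Ω E ∧ ∀ F : ℕ → Set X, IsChainIn Ω F → ChainDivides F E → ChainDivides E F

/-- A chain represents a singleton prime end if moreover its impression is a single point. -/
def IsSingletonPrimeChain {X : Type*} [MetricSpace X] (Ω : Set X) (E : ℕ → Set X) : Prop :=
  IsPrimeChain Ω E ∧ ∃ x : X, impression E = {x}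

/-- The bounded turning condition (linear connectedness): any two distinct points of `Ω` lie in a
continuum contained in `Ω` of diameter at most `L` times their distance. -/
def BoundedTurning {X : Type*} [MetricSpace X] (Ω : Set X) : Prop :=
  ∃ L : ℝ, 1 ≤ L ∧ ∀ x ∈ Ω, ∀ y ∈ Ω, x ≠ y → ∃ K : Set X,
    K ⊆ Ω ∧ IsCompact K ∧ IsConnected K ∧ K.Nontrivial ∧ x ∈ K ∧ y ∈ K ∧
    Metric.diam K ≤ L * dist x y

/-- `Ω` is finitely connected at a boundary point `x`. -/
def FinitelyConnectedAt {X : Type*} [MetricSpace X] (Ω : Set X) (x : X) : Prop :=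
  ∀ r : ℝ, 0 < r → ∃ U : Set X, IsOpen U ∧ Bornology.IsBounded U ∧ x ∈ U ∧
    U ⊆ Metric.ball x r ∧
    {C : Set X | ∃ y ∈ U ∩ Ω, C = connectedComponentIn (U ∩ Ω) y}.Finite

/-- `Ω` is finitely connected at the boundary. -/
def FinitelyConnectedAtBoundary {X : Type*} [MetricSpace X] (Ω : Set X) : Prop :=
  ∀ x ∈ frontier Ω, FinitelyConnectedAt Ω x

/-- `Ω` is locally connected at a boundary point `x`. -/
def LocallyConnectedAt {X : Type*} [MetricSpace X] (Ω : Set X) (x : X) : Prop :=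
  ∀ r : ℝ, 0 < r → ∃ U : Set X, IsOpen U ∧ Bornology.IsBounded U ∧ x ∈ U ∧
    U ⊆ Metric.ball x r ∧ IsConnected (U ∩ Ω)

/-- `Ω` is locally connected at the boundary. -/
def LocallyConnectedAtBoundary {X : Type*} [MetricSpace X] (Ω : Set X) : Prop :=
  ∀ x ∈ frontier Ω, LocallyConnectedAt Ω x

/-- `f` is a homeomorphism of `Ω` onto `Ω'` with inverse `g`. -/
def IsHomeoBetween {X Y : Type*} [MetricSpace X] [MetricSpace Y] (f : X → Y) (g : Y → X)
    (Ω : Set X) (Ω' : Set Y) : Prop :=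
  ContinuousOn f Ω ∧ ContinuousOn g Ω' ∧ Set.MapsTo f Ω Ω' ∧ Set.MapsTo g Ω' Ω ∧
  (∀ x ∈ Ω, g (f x) = x) ∧ (∀ y ∈ Ω', f (g y) = y)

/-- The class `F(Ω, Ω')`: homeomorphisms such that for all connected `E, F ⊊ Ω`,
`dist_{M'}(E,F) = 0` iff `dist_{M'}(f(E), f(F)) = 0`. -/
def ClassF {X Y : Type*} [MetricSpace X] [MetricSpace Y] (Ω : Set X) (Ω' : Set Y)
    (f : X → Y) (g : Y → X) : Prop :=
  IsHomeoBetween f g Ω Ω' ∧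
  ∀ E F : Set X, E ⊆ Ω → E ≠ Ω → IsConnected E → F ⊆ Ω → F ≠ Ω → IsConnected F →
    (innerDiamDist Ω E F = 0 ↔ innerDiamDist Ω' (f '' E) (f '' F) = 0)

/-- The cluster set `C(f, x)` of `f : Ω → Y` at `x`. -/
def clusterSetOn {X Y : Type*} [MetricSpace X] [MetricSpace Y] (f : X → Y) (Ω : Set X)
    (x : X) : Set Y :=
  ⋂ U ∈ 𝓝 x, closure (f '' (U ∩ Ω))

/-!
Call two points of a set rectifiably joined if a rectifiable curve in the set connects them. In a
quasiconvex space, open connected sets are rectifiably connected, and a domain of bounded turning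
is locally connected at each boundary point `x`; hence two subsets of `Ω` accumulating at `x` are
at inner diameter distance `0`.

Suppose `f` had two cluster values `a ≠ b` at `x ∈ ∂Ω`. As `f` is a homeomorphism they lie in `∂Ω'`,
and since there are only finitely many components near `a` and near `b`, some connected `E ⊆ Ω'`
close to `a` and some connected `F ⊆ Ω'` close to `b` have preimages accumulating at `x`. These
preimages are at inner diameter distance `0`, while `E` and `F` are a positive distance apart,
contradicting `f ∈ F(Ω, Ω')`. Compactness of `closure Ω'` turns uniqueness of the cluster value into
a limit.

For the cluster sets, `y` is a cluster value of `f` at `x` exactly when `x` is one of `f⁻¹` at `y`,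
and `f⁻¹` has a cluster value at every `y ∈ ∂Ω'` because `closure Ω` is compact.
-/

section Doubling

variable {X : Type*} [MetricSpace X]

theorem DoublingSpace.exists_finite_cover_ball (h : DoublingSpace X) (x : X) (r : ℝ) (n : ℕ) :
    ∃ t : Set X, t.Finite ∧ ball x r ⊆ ⋃ y ∈ t, ball y (r / 2 ^ n) := by
  obtain ⟨N, hN⟩ := h
  induction n with
  | zero => exact ⟨{x}, finite_singleton x, by simp⟩
  | succ n ih =>
    obtain ⟨t, ht, hcover⟩ := ih
    choose s _ hs using fun y : X => hN y (r / 2 ^ n)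
    refine ⟨⋃ y ∈ t, (s y : Set X), ht.biUnion fun y _ => (s y).finite_toSet, fun z hz => ?_⟩
    obtain ⟨y, hy, hzy⟩ := mem_iUnion₂.1 (hcover hz)
    obtain ⟨w, hw, hzw⟩ := mem_iUnion₂.1 (hs y hzy)
    refine mem_iUnion₂.2 ⟨w, mem_iUnion₂.2 ⟨y, hy, hw⟩, ?_⟩
    rwa [pow_succ, ← div_div]

theorem DoublingSpace.totallyBounded (h : DoublingSpace X) {s : Set X} (hs : IsBounded s) :
    TotallyBounded s := by
  rcases s.eq_empty_or_nonempty with rfl | ⟨x, -⟩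
  · exact totallyBounded_empty
  obtain ⟨r, hr⟩ := hs.subset_ball x
  rw [Metric.totallyBounded_iff]
  intro ε hε
  obtain ⟨n, hn⟩ := pow_unbounded_of_one_lt (r / ε) one_lt_two
  obtain ⟨t, ht, hcover⟩ := h.exists_finite_cover_ball x r n
  have hle : r / 2 ^ n ≤ ε := by
    rw [div_lt_iff₀ hε] at hn
    rw [div_le_iff₀ (by positivity)]
    linarith
  exact ⟨t, ht, (hr.trans hcover).trans (iUnion₂_mono fun _ _ => ball_subset_ball hle)⟩

theorem DoublingSpace.isCompact_closure [CompleteSpace X] (h : DoublingSpace X) {s : Set X}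
    (hs : IsBounded s) : IsCompact (closure s) :=
  (h.totallyBounded hs).closure.isCompact_of_isClosed isClosed_closure

end Doubling

section RectifiablyJoined

variable {X : Type*} [MetricSpace X]

/-- The points `p` and `q` are joined by a rectifiable curve inside `T`. Curves are encoded as in
`innerDiamDist`, by maps on `ℝ` of which only the restriction to `[0, 1]` matters. -/
def RectifiablyJoinedIn (T : Set X) (p q : X) : Prop :=
  ∃ γ : ℝ → X, ContinuousOn γ (Icc 0 1) ∧ γ '' Icc 0 1 ⊆ T ∧
    eVariationOn γ (Icc 0 1) < ⊤ ∧ γ 0 = p ∧ γ 1 = q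

/-- Local rectifiable connectedness, the topological trace of quasiconvexity: each point is joined
to all nearby points by rectifiable curves staying near it. It lets connected open sets be
traversed by the curves that `innerDiamDist` minimizes over. -/
def LocallyRectifiablyConnected (X : Type*) [MetricSpace X] : Prop :=
  ∀ p : X, ∀ U ∈ 𝓝 p, ∀ᶠ q in 𝓝 p, RectifiablyJoinedIn U p q

variable {T : Set X} {p q r : X}

theorem RectifiablyJoinedIn.symm (h : RectifiablyJoinedIn T p q) : RectifiablyJoinedIn T q p := by
  obtain ⟨γ, hγc, hγT, hγv, rfl, rfl⟩ := h
  have hmaps : MapsTo (fun t : ℝ => 1 - t) (Icc 0 1) (Icc 0 1) := fun t ht =>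
    ⟨by linarith [ht.2], by linarith [ht.1]⟩
  refine ⟨γ ∘ fun t => 1 - t, hγc.comp (by fun_prop) hmaps, ?_, ?_, by simp, by simp⟩
  · rw [image_comp]
    exact (image_mono hmaps.image_subset).trans hγT
  · exact (eVariationOn.comp_le_of_antitoneOn γ _ (fun _ _ _ _ h => by linarith) hmaps).trans_lt hγv

theorem RectifiablyJoinedIn.trans (h₁ : RectifiablyJoinedIn T p q)
    (h₂ : RectifiablyJoinedIn T q r) : RectifiablyJoinedIn T p r := by
  obtain ⟨α, hαc, hαT, hαv, hα0, hα1⟩ := h₁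
  obtain ⟨β, hβc, hβT, hβv, hβ0, hβ1⟩ := h₂
  let γ : ℝ → X := fun t => if t ≤ 1 / 2 then α (2 * t) else β (2 * t - 1)
  have hγα : EqOn γ (α ∘ fun t => 2 * t) (Icc 0 (1 / 2)) := fun t ht => if_pos ht.2
  have hγβ : EqOn γ (β ∘ fun t => 2 * t - 1) (Icc (1 / 2) 1) := by
    intro t ht
    rcases ht.1.eq_or_lt with rfl | h
    · simp [γ, hα1, hβ0]
    · exact if_neg h.not_ge
  have hmapsα : MapsTo (fun t : ℝ => 2 * t) (Icc 0 (1 / 2)) (Icc 0 1) := fun t ht =>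
    ⟨by linarith [ht.1], by linarith [ht.2]⟩
  have hmapsβ : MapsTo (fun t : ℝ => 2 * t - 1) (Icc (1 / 2) 1) (Icc 0 1) := fun t ht =>
    ⟨by linarith [ht.1], by linarith [ht.2]⟩
  have hunion : Icc (0 : ℝ) (1 / 2) ∪ Icc (1 / 2) 1 = Icc 0 1 :=
    Icc_union_Icc_eq_Icc (by norm_num) (by norm_num)
  refine ⟨γ, ?_, ?_, ?_, by simp [γ, hα0], by norm_num [γ, hβ1]⟩
  · rw [← hunion]
    exact ((hαc.comp (by fun_prop) hmapsα).congr hγα).union_of_isClosed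
      ((hβc.comp (by fun_prop) hmapsβ).congr hγβ) isClosed_Icc isClosed_Icc
  · rw [← hunion, image_union, hγα.image_eq, hγβ.image_eq, image_comp, image_comp]
    exact union_subset ((image_mono hmapsα.image_subset).trans hαT)
      ((image_mono hmapsβ.image_subset).trans hβT)
  · rw [← hunion, eVariationOn.union γ (isGreatest_Icc (by norm_num)) (isLeast_Icc (by norm_num)),
      eVariationOn.congr hγα, eVariationOn.congr hγβ]
    refine ENNReal.add_lt_top.2 ⟨lt_of_le_of_lt ?_ hαv, lt_of_le_of_lt ?_ hβv⟩
    · exact eVariationOn.comp_le_of_monotoneOn α _ (fun _ _ _ _ h => by linarith) hmapsα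
    · exact eVariationOn.comp_le_of_monotoneOn β _ (fun _ _ _ _ h => by linarith) hmapsβ

theorem RectifiablyJoinedIn.mem_connectedComponentIn (h : RectifiablyJoinedIn T p q) :
    q ∈ connectedComponentIn T p := by
  obtain ⟨γ, hγc, hγT, -, rfl, rfl⟩ := h
  exact (isPreconnected_Icc.image γ hγc).subset_connectedComponentIn
    (mem_image_of_mem γ (by simp)) hγT (mem_image_of_mem γ (by simp))

theorem QuasiconvexSpace.locallyRectifiablyConnected (h : QuasiconvexSpace X) :
    LocallyRectifiablyConnected X := by
  obtain ⟨C, hC, hcurve⟩ := h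
  have hC_pos : 0 < C := by linarith
  intro p U hU
  obtain ⟨ε, hε, hball⟩ := Metric.mem_nhds_iff.1 hU
  filter_upwards [ball_mem_nhds p (div_pos hε hC_pos)] with q hq
  obtain ⟨γ, hγc, rfl, rfl, hγv⟩ := hcurve p q
  refine ⟨γ, hγc, ?_, hγv.trans_lt ENNReal.ofReal_lt_top, rfl, rfl⟩
  rintro _ ⟨t, ht, rfl⟩
  have hdist : dist (γ t) (γ 0) ≤ C * dist (γ 0) (γ 1) := by
    have h := (eVariationOn.edist_le γ ht (left_mem_Icc.2 zero_le_one)).trans hγv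
    rwa [edist_dist, ENNReal.ofReal_le_ofReal_iff (by positivity)] at h
  rw [mem_ball', lt_div_iff₀ hC_pos] at hq
  exact hball (mem_ball.2 (by linarith))

theorem LocallyRectifiablyConnected.locallyConnectedSpace (h : LocallyRectifiablyConnected X) :
    LocallyConnectedSpace X :=
  locallyConnectedSpace_iff_connected_subsets.2 fun p U hU =>
    ⟨connectedComponentIn U p,
      (h p U hU).mono fun _ hq => hq.mem_connectedComponentIn,
      isPreconnected_connectedComponentIn, connectedComponentIn_subset U p⟩

theorem LocallyRectifiablyConnected.rectifiablyJoinedIn (h : LocallyRectifiablyConnected X)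
    (hT : IsOpen T) (hTc : IsPreconnected T) (hp : p ∈ T) (hq : q ∈ T) :
    RectifiablyJoinedIn T p q :=
  hTc.induction₂ (RectifiablyJoinedIn T)
    (fun x hx => mem_nhdsWithin_of_mem_nhds (h x T (hT.mem_nhds hx)))
    (fun _ _ _ _ _ _ => RectifiablyJoinedIn.trans) (fun _ _ _ _ => RectifiablyJoinedIn.symm) hp hq

end RectifiablyJoined

section InnerDiamDist

variable {X : Type*} [MetricSpace X] {Ω E F T : Set X} {p q x : X}

theorem RectifiablyJoinedIn.innerDiamDist_le (h : RectifiablyJoinedIn T p q) (hT : T ⊆ Ω)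
    (hp : p ∈ E) (hq : q ∈ F) : innerDiamDist Ω E F ≤ Metric.ediam T := by
  obtain ⟨γ, hγc, hγT, hγv, rfl, rfl⟩ := h
  exact (iInf₂_le γ ⟨hγc, hγT.trans hT, hγv, hp, hq⟩).trans (Metric.ediam_mono hγT)

theorem innerDiamDist_ne_zero_of_areSeparated (h : AreSeparated E F) :
    innerDiamDist Ω E F ≠ 0 := by
  obtain ⟨c, hc, hsep⟩ := h
  have hle : c ≤ innerDiamDist Ω E F := le_iInf₂ fun γ ⟨_, _, _, h0, h1⟩ =>
    (hsep _ h0 _ h1).trans (Metric.edist_le_ediam_of_mem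
      (mem_image_of_mem γ (by simp)) (mem_image_of_mem γ (by simp)))
  exact ((pos_iff_ne_zero.2 hc).trans_le hle).ne'

theorem LocallyConnectedAt.innerDiamDist_eq_zero (h : LocallyConnectedAt Ω x)
    (hX : LocallyRectifiablyConnected X) (hΩ : IsOpen Ω) (hE : E ⊆ Ω) (hF : F ⊆ Ω)
    (hxE : x ∈ closure E) (hxF : x ∈ closure F) : innerDiamDist Ω E F = 0 := by
  refine le_antisymm (ENNReal.le_of_forall_pos_le_add fun ε hε _ => ?_) bot_le
  obtain ⟨U, hU, -, hxU, hUball, hUΩ⟩ := h (ε / 2) (half_pos (NNReal.coe_pos.2 hε))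
  obtain ⟨p, hpU, hpE⟩ := mem_closure_iff.1 hxE U hU hxU
  obtain ⟨q, hqU, hqF⟩ := mem_closure_iff.1 hxF U hU hxU
  have hjoin : RectifiablyJoinedIn (U ∩ Ω) p q :=
    hX.rectifiablyJoinedIn (hU.inter hΩ) hUΩ.isPreconnected ⟨hpU, hE hpE⟩ ⟨hqU, hF hqF⟩
  have hdiam : Metric.ediam (U ∩ Ω) ≤ ε := Metric.ediam_le fun a ha b hb => by
    rw [edist_nndist, ENNReal.coe_le_coe, ← NNReal.coe_le_coe, coe_nndist]
    linarith [dist_triangle_right a b x, mem_ball.1 (hUball ha.1), mem_ball.1 (hUball hb.1)]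
  simpa using (hjoin.innerDiamDist_le inter_subset_right hpE hqF).trans hdiam

end InnerDiamDist

section BoundaryConnectedness

variable {X : Type*} [MetricSpace X] {Ω : Set X} {x : X}

theorem locallyConnectedAt_of_forall_exists_ball_inter_subset
    (h : ∀ r > 0, ∃ δ > 0, ∃ V, IsOpen V ∧ IsConnected V ∧ V ⊆ Ω ∩ ball x r ∧ ball x δ ∩ Ω ⊆ V) :
    LocallyConnectedAt Ω x := by
  intro r hr
  obtain ⟨δ, hδ, V, hV, hVc, hVsub, hballV⟩ := h r hr
  have hUball : ball x (min δ r) ∪ V ⊆ ball x r :=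
    union_subset (ball_subset_ball (min_le_right _ _)) (hVsub.trans inter_subset_right)
  have hUΩ : (ball x (min δ r) ∪ V) ∩ Ω = V := by
    rw [union_inter_distrib_right, inter_eq_left.2 (hVsub.trans inter_subset_left),
      union_eq_right.2 ((inter_subset_inter_left Ω (ball_subset_ball (min_le_left _ _))).trans
        hballV)]
  exact ⟨ball x (min δ r) ∪ V, isOpen_ball.union hV, isBounded_ball.subset hUball,
    Or.inl (mem_ball_self (lt_min hδ hr)), hUball, hUΩ.symm ▸ hVc⟩

theorem BoundedTurning.locallyConnectedAt [LocallyConnectedSpace X] (h : BoundedTurning Ω)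
    (hΩ : IsOpen Ω) (hx : x ∈ closure Ω) : LocallyConnectedAt Ω x := by
  obtain ⟨L, hL, hturn⟩ := h
  refine locallyConnectedAt_of_forall_exists_ball_inter_subset fun r hr => ?_
  set δ := r / (3 * L) with hδ_def
  have hδ : 0 < δ := by positivity
  have hLδ : 3 * (L * δ) = r := by
    rw [hδ_def]
    field_simp
  have hδr : δ ≤ L * δ := le_mul_of_one_le_left hδ.le hL
  obtain ⟨z₀, hz₀Ω, hz₀⟩ := Metric.mem_closure_iff.1 hx δ hδ
  rw [dist_comm] at hz₀
  have hz₀V : z₀ ∈ Ω ∩ ball x r := ⟨hz₀Ω, mem_ball.2 (by linarith)⟩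
  set V := connectedComponentIn (Ω ∩ ball x r) z₀
  have hVsub : V ⊆ Ω ∩ ball x r := connectedComponentIn_subset _ _
  have hballV : ball x δ ∩ Ω ⊆ V := by
    rintro z ⟨hz, hzΩ⟩
    rcases eq_or_ne z z₀ with rfl | hne
    · exact mem_connectedComponentIn hz₀V
    obtain ⟨K, hKΩ, hKcomp, hKconn, -, hzK, hz₀K, hKdiam⟩ := hturn z hzΩ z₀ hz₀Ω hne
    refine hKconn.isPreconnected.subset_connectedComponentIn hz₀K (subset_inter hKΩ ?_) hzK
    intro k hk
    have hzz₀ : L * dist z z₀ < L * (2 * δ) := by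
      gcongr
      linarith [dist_triangle_right z z₀ x, mem_ball.1 hz]
    have hkz₀ := dist_le_diam_of_mem hKcomp.isBounded hk hz₀K
    exact mem_ball.2 (by linarith [dist_triangle k z₀ x])
  exact ⟨δ, hδ, V, (hΩ.inter isOpen_ball).connectedComponentIn,
    isConnected_connectedComponentIn_iff.2 hz₀V, hVsub, hballV⟩

theorem FinitelyConnectedAt.exists_isConnected_frequently {ι : Type*} {l : Filter ι} {u : ι → X}
    (h : FinitelyConnectedAt Ω x) (hx : MapClusterPt x l u) (hu : ∀ᶠ i in l, u i ∈ Ω) {r : ℝ}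
    (hr : 0 < r) : ∃ E ⊆ Ω, IsConnected E ∧ E ⊆ ball x r ∧ ∃ᶠ i in l, u i ∈ E := by
  obtain ⟨U, hU, -, hxU, hUball, hfin⟩ := h r hr
  by_contra! hcon
  have hcomponents : ∀ C ∈ {C : Set X | ∃ y ∈ U ∩ Ω, C = connectedComponentIn (U ∩ Ω) y},
      ∀ᶠ i in l, u i ∉ C := by
    rintro _ ⟨y, hy, rfl⟩
    have hsub := connectedComponentIn_subset (U ∩ Ω) y
    exact (hcon _ (hsub.trans inter_subset_right)
      (isConnected_connectedComponentIn_iff.2 hy) ((hsub.trans inter_subset_left).trans hUball))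
  refine hx.frequently (hU.mem_nhds hxU) ?_
  filter_upwards [(eventually_all_finite hfin).2 hcomponents, hu] with i hi hiΩ hiU
  exact hi _ ⟨u i, ⟨hiU, hiΩ⟩, rfl⟩ (mem_connectedComponentIn ⟨hiU, hiΩ⟩)

end BoundaryConnectedness

section ClusterValues

theorem mapClusterPt_of_leftInvOn {X Y : Type*} [TopologicalSpace X] [TopologicalSpace Y]
    {f : X → Y} {g : Y → X} {Ω : Set X} {Ω' : Set Y} {x : X} {y : Y} (hf : MapsTo f Ω Ω')
    (hgf : LeftInvOn g f Ω) (h : MapClusterPt y (𝓝[Ω] x) f) : MapClusterPt x (𝓝[Ω'] y) g := by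
  refine mapClusterPt_iff_frequently.2 fun U hU => frequently_iff.2 fun {W} hW => ?_
  obtain ⟨V, hV, hVW⟩ := mem_nhdsWithin_iff_exists_mem_nhds_inter.1 hW
  obtain ⟨z, hzV, hzU, hzΩ⟩ := ((h.frequently hV).and_eventually
    (inter_mem (mem_nhdsWithin_of_mem_nhds hU) self_mem_nhdsWithin)).exists
  exact ⟨f z, hVW ⟨hzV, hf hzΩ⟩, (hgf hzΩ).symm ▸ hzU⟩

variable {X Y : Type*} [MetricSpace X] [MetricSpace Y] {f : X → Y} {g : Y → X} {Ω : Set X}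
  {Ω' : Set Y} {x : X} {y : Y}

theorem mem_clusterSetOn_iff_mapClusterPt :
    y ∈ clusterSetOn f Ω x ↔ MapClusterPt y (𝓝[Ω] x) f := by
  have hbasis := ((𝓝 x).basis_sets.inf_principal Ω).map f
  rw [MapClusterPt, nhdsWithin, hbasis.clusterPt_iff_forall_mem_closure, clusterSetOn, mem_iInter₂]
  rfl

theorem IsHomeoBetween.symm (h : IsHomeoBetween f g Ω Ω') : IsHomeoBetween g f Ω' Ω :=
  let ⟨hfc, hgc, hfm, hgm, hgf, hfg⟩ := h
  ⟨hgc, hfc, hgm, hfm, hfg, hgf⟩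

theorem IsHomeoBetween.continuousOn (h : IsHomeoBetween f g Ω Ω') : ContinuousOn f Ω := h.1

theorem IsHomeoBetween.mapsTo (h : IsHomeoBetween f g Ω Ω') : MapsTo f Ω Ω' := h.2.2.1

theorem IsHomeoBetween.leftInvOn (h : IsHomeoBetween f g Ω Ω') : LeftInvOn g f Ω := h.2.2.2.2.1

theorem IsHomeoBetween.mapClusterPt_symm (h : IsHomeoBetween f g Ω Ω')
    (hy : MapClusterPt y (𝓝[Ω] x) f) : MapClusterPt x (𝓝[Ω'] y) g :=
  mapClusterPt_of_leftInvOn h.mapsTo h.leftInvOn hy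

theorem IsHomeoBetween.eventually_mem (h : IsHomeoBetween f g Ω Ω') : ∀ᶠ z in 𝓝[Ω] x, f z ∈ Ω' :=
  mem_of_superset self_mem_nhdsWithin h.mapsTo

theorem IsHomeoBetween.mem_closure_of_mapClusterPt (h : IsHomeoBetween f g Ω Ω')
    (hy : MapClusterPt y (𝓝[Ω] x) f) : y ∈ closure Ω' :=
  hy.clusterPt.mem_closure_of_mem Ω' h.eventually_mem

theorem IsHomeoBetween.mem_frontier_of_mapClusterPt (h : IsHomeoBetween f g Ω Ω') (hx : x ∉ Ω)
    (hy : MapClusterPt y (𝓝[Ω] x) f) : y ∈ frontier Ω' := by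
  refine ⟨h.mem_closure_of_mapClusterPt hy, fun hy_interior => ?_⟩
  have hyΩ' : y ∈ Ω' := interior_subset hy_interior
  have hcluster : ClusterPt x (𝓝 (g y)) :=
    (h.mapClusterPt_symm hy).clusterPt.mono (h.symm.continuousOn y hyΩ')
  have hgy : x = g y := eq_of_nhds_neBot hcluster
  exact hx (hgy ▸ h.symm.mapsTo hyΩ')

theorem IsHomeoBetween.exists_mapClusterPt (h : IsHomeoBetween f g Ω Ω')
    (hΩ' : IsCompact (closure Ω')) (hx : x ∈ closure Ω) : ∃ y, MapClusterPt y (𝓝[Ω] x) f := by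
  have : (𝓝[Ω] x).NeBot := mem_closure_iff_nhdsWithin_neBot.1 hx
  have hle : map f (𝓝[Ω] x) ≤ 𝓟 (closure Ω') :=
    le_principal_iff.2 (h.eventually_mem.mono fun _ hz => subset_closure hz)
  obtain ⟨y, -, hy⟩ := hΩ'.exists_mapClusterPt hle
  exact ⟨y, hy⟩

theorem IsHomeoBetween.union_clusterSetOn_eq_closure (h : IsHomeoBetween f g Ω Ω')
    (hΩ : IsCompact (closure Ω)) :
    Ω' ∪ ⋃ x ∈ frontier Ω, clusterSetOn f Ω x = closure Ω' := by
  refine subset_antisymm (union_subset subset_closure (iUnion₂_subset fun x _ y hy =>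
    h.mem_closure_of_mapClusterPt (mem_clusterSetOn_iff_mapClusterPt.1 hy))) fun y hy => ?_
  by_cases hyΩ' : y ∈ Ω'
  · exact Or.inl hyΩ'
  obtain ⟨x, hx⟩ := h.symm.exists_mapClusterPt hΩ hy
  exact Or.inr (mem_iUnion₂.2 ⟨x, h.symm.mem_frontier_of_mapClusterPt hyΩ' hx,
    mem_clusterSetOn_iff_mapClusterPt.2 (h.symm.mapClusterPt_symm hx)⟩)

end ClusterValues

section Extension

theorem areSeparated_ball {X : Type*} [PseudoMetricSpace X] {x y : X} {r s : ℝ}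
    (h : r + s < dist x y) : AreSeparated (ball x r) (ball y s) := by
  refine ⟨ENNReal.ofReal (dist x y - (r + s)), by simpa using h, fun u hu v hv => ?_⟩
  rw [edist_dist]
  refine ENNReal.ofReal_le_ofReal ?_
  linarith [dist_triangle4 x u v y, mem_ball'.1 hu, mem_ball.1 hv]

theorem exists_continuousOn_closure_extension {X Y : Type*} [TopologicalSpace X]
    [TopologicalSpace Y] [T3Space Y] {f : X → Y} {A : Set X} {B : Set Y} (hf : ContinuousOn f A)
    (hm : MapsTo f A B) (hlim : ∀ x ∈ closure A \ A, ∃ y, Tendsto f (𝓝[A] x) (𝓝 y)) :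
    ∃ F : X → Y, ContinuousOn F (closure A) ∧ EqOn F f A ∧ MapsTo F (closure A) (closure B) := by
  have hlim' : ∀ x ∈ closure A, ∃ y, Tendsto f (𝓝[A] x) (𝓝 y) := fun x hx =>
    (em (x ∈ A)).elim (fun hxA => ⟨f x, hf x hxA⟩) fun hxA => hlim x ⟨hx, hxA⟩
  have hcont := continuousOn_extendFrom subset_rfl hlim'
  have hext : EqOn (extendFrom A f) f A := extendFrom_extends hf
  exact ⟨extendFrom A f, hcont, hext, (hm.congr hext.symm).closure_of_continuousOn hcont⟩

variable {X Y : Type*} [MetricSpace X] [MetricSpace Y] {f : X → Y} {g : Y → X} {Ω : Set X}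
  {Ω' : Set Y} {x : X}

/-- The half of the defining property of `ClassF` that yields the extension: `f` maps connected
proper subsets of `Ω` at inner diameter distance zero to such sets in `Ω'`. -/
def PreservesZeroInnerDiamDist (Ω : Set X) (Ω' : Set Y) (f : X → Y) : Prop :=
  ∀ E F : Set X, E ⊂ Ω → IsConnected E → F ⊂ Ω → IsConnected F →
    innerDiamDist Ω E F = 0 → innerDiamDist Ω' (f '' E) (f '' F) = 0

theorem ClassF.preservesZeroInnerDiamDist (h : ClassF Ω Ω' f g) :
    PreservesZeroInnerDiamDist Ω Ω' f := fun E F hE hEc hF hFc =>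
  (h.2 E F hE.subset hE.ne hEc hF.subset hF.ne hFc).1

theorem IsHomeoBetween.image_ssubset_of_disjoint (h : IsHomeoBetween f g Ω Ω') {A B : Set X}
    (hA : A ⊆ Ω) (hB : B ⊆ Ω) (hB_nonempty : B.Nonempty) (hAB : Disjoint A B) : f '' A ⊂ Ω' := by
  obtain ⟨b, hb⟩ := hB_nonempty
  refine ssubset_iff_exists.2
    ⟨(image_mono hA).trans h.mapsTo.image_subset, f b, h.mapsTo (hB hb), ?_⟩
  rintro ⟨a, ha, hab⟩
  have hab_eq : a = b := h.leftInvOn.injOn (hA ha) (hB hb) hab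
  exact disjoint_left.1 hAB ha (hab_eq ▸ hb)

theorem IsHomeoBetween.mem_closure_image_of_frequently (h : IsHomeoBetween f g Ω Ω') {S : Set Y}
    (hS : ∃ᶠ z in 𝓝[Ω] x, f z ∈ S) : x ∈ closure (g '' S) :=
  mem_closure_iff_frequently.2 <| (frequently_nhdsWithin_iff.1 hS).mono
    fun z ⟨hzS, hzΩ⟩ => ⟨f z, hzS, h.leftInvOn hzΩ⟩

theorem PreservesZeroInnerDiamDist.eq_of_mapClusterPt (hf : PreservesZeroInnerDiamDist Ω Ω' f)
    (hfg : IsHomeoBetween f g Ω Ω') (hX : LocallyRectifiablyConnected X) (hΩ : IsOpen Ω)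
    (hx : LocallyConnectedAt Ω x) {a b : Y} (ha : FinitelyConnectedAt Ω' a)
    (hb : FinitelyConnectedAt Ω' b) (hfa : MapClusterPt a (𝓝[Ω] x) f)
    (hfb : MapClusterPt b (𝓝[Ω] x) f) : a = b := by
  by_contra hab
  have hab_pos : 0 < dist a b := dist_pos.2 hab
  have hr : 0 < dist a b / 3 := by positivity
  obtain ⟨E, hEΩ, hEc, hEball, hfE⟩ := ha.exists_isConnected_frequently hfa hfg.eventually_mem hr
  obtain ⟨F, hFΩ, hFc, hFball, hfF⟩ := hb.exists_isConnected_frequently hfb hfg.eventually_mem hr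
  have hsep : AreSeparated E F :=
    (areSeparated_ball (by linarith : dist a b / 3 + dist a b / 3 < dist a b)).mono hEball hFball
  have hgE := hfg.symm.image_ssubset_of_disjoint hEΩ hFΩ hFc.nonempty hsep.disjoint
  have hgF := hfg.symm.image_ssubset_of_disjoint hFΩ hEΩ hEc.nonempty hsep.disjoint.symm
  have hgc : ContinuousOn g Ω' := hfg.symm.continuousOn
  have hzero : innerDiamDist Ω (g '' E) (g '' F) = 0 :=
    hx.innerDiamDist_eq_zero hX hΩ hgE.subset hgF.subset
      (hfg.mem_closure_image_of_frequently hfE) (hfg.mem_closure_image_of_frequently hfF)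
  have himage := hf _ _ hgE (hEc.image g (hgc.mono hEΩ)) hgF (hFc.image g (hgc.mono hFΩ)) hzero
  rw [hfg.symm.leftInvOn.image_image' hEΩ, hfg.symm.leftInvOn.image_image' hFΩ] at himage
  exact innerDiamDist_ne_zero_of_areSeparated hsep himage

theorem PreservesZeroInnerDiamDist.exists_tendsto (hf : PreservesZeroInnerDiamDist Ω Ω' f)
    (hfg : IsHomeoBetween f g Ω Ω') (hX : LocallyRectifiablyConnected X) (hΩ : IsOpen Ω)
    (hx : LocallyConnectedAt Ω x) (hΩ'c : IsCompact (closure Ω'))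
    (hΩ'fc : FinitelyConnectedAtBoundary Ω') (hxΩ : x ∈ closure Ω \ Ω) :
    ∃ y, Tendsto f (𝓝[Ω] x) (𝓝 y) := by
  have hfc : ∀ y, MapClusterPt y (𝓝[Ω] x) f → FinitelyConnectedAt Ω' y := fun y hy =>
    hΩ'fc y (hfg.mem_frontier_of_mapClusterPt hxΩ.2 hy)
  obtain ⟨y, hy⟩ := hfg.exists_mapClusterPt hΩ'c hxΩ.1
  exact ⟨y, hΩ'c.tendsto_nhds_of_unique_mapClusterPt
    (hfg.eventually_mem.mono fun _ hz => subset_closure hz) fun y' _ hy' =>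
      hf.eq_of_mapClusterPt hfg hX hΩ hx (hfc y' hy') (hfc y hy) hy' hy⟩

theorem statement_8_general (hX : LocallyRectifiablyConnected X) (hΩ : IsOpen Ω)
    (hΩc : IsCompact (closure Ω)) (hΩlc : LocallyConnectedAtBoundary Ω)
    (hΩ'c : IsCompact (closure Ω')) (hΩ'fc : FinitelyConnectedAtBoundary Ω')
    (hfg : IsHomeoBetween f g Ω Ω') (hf : PreservesZeroInnerDiamDist Ω Ω' f) :
    (∃ F : X → Y, ContinuousOn F (closure Ω) ∧ EqOn F f Ω ∧
      MapsTo F (closure Ω) (closure Ω')) ∧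
    (Ω' ∪ ⋃ x ∈ frontier Ω, clusterSetOn f Ω x) = closure Ω' :=
  ⟨exists_continuousOn_closure_extension hfg.continuousOn hfg.mapsTo fun x hx =>
      hf.exists_tendsto hfg hX hΩ (hΩlc x (hΩ.frontier_eq ▸ hx)) hΩ'c hΩ'fc hx,
    hfg.union_clusterSetOn_eq_closure hΩc⟩

end Extension

/-- if `Ω` is of bounded turning and `Ω'` is finitely connected at the
boundary, then every `f ∈ F(Ω, Ω')` extends continuously to `F : closure Ω → closure Ω'`,
and `Ω' ∪ ⋃_{x ∈ ∂Ω} C(f,x) = closure Ω'`. -/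
theorem statement_8 {X Y : Type*} [MetricSpace X] [MetricSpace Y]
    (hX : AssumptionsA X) (hY : AssumptionsA Y)
    (Ω : Set X) (hΩdom : IsDomainIn Ω) (hΩbdd : Bornology.IsBounded Ω)
    (hΩne : Ω ≠ Set.univ) (hΩbt : BoundedTurning Ω)
    (Ω' : Set Y) (hΩ'dom : IsDomainIn Ω') (hΩ'bdd : Bornology.IsBounded Ω')
    (hΩ'ne : Ω' ≠ Set.univ) (hΩ'fc : FinitelyConnectedAtBoundary Ω')
    (f : X → Y) (g : Y → X) (hf : ClassF Ω Ω' f g) :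
    (∃ F : X → Y, ContinuousOn F (closure Ω) ∧ Set.EqOn F f Ω ∧
      Set.MapsTo F (closure Ω) (closure Ω')) ∧
    (Ω' ∪ ⋃ x ∈ frontier Ω, clusterSetOn f Ω x) = closure Ω' := by
  obtain ⟨_, hXd, hXq⟩ := hX
  obtain ⟨_, hYd, _⟩ := hY
  have hXr := hXq.locallyRectifiablyConnected
  have := hXr.locallyConnectedSpace
  exact statement_8_general hXr hΩdom.1 (hXd.isCompact_closure hΩbdd)
    (fun x hx => hΩbt.locallyConnectedAt hΩdom.1 (frontier_subset_closure hx))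
    (hYd.isCompact_closure hΩ'bdd) hΩ'fc hf.1 hf.preservesZeroInnerDiamDist
end
end

section
/- Let Ω be a bounded domain in a metric space X and let E_{k+1} ⊆ E_k ⊊ Ω be nonempty sets with dist_M(Ω ∩ ∂E_{k+1}, Ω ∩ ∂E_k) > 0, where dist_M denotes the Mazurkiewicz distance in Ω. Then E_{k+1} is contained in the interior of E_k; in particular, the interior of E_k is nonempty. -/
open Set Metric Filter Bornology
open scoped ENNReal Topology

noncomputable section

section

variable {X : Type*}

theorem closure_inter_frontier_subset_frontier [TopologicalSpace X] {A B : Set X} (hAB : A ⊆ B) :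
    closure A ∩ frontier B ⊆ frontier A :=
  fun _ ⟨hxA, hxB⟩ => ⟨hxA, fun hx => hxB.2 (interior_mono hAB hx)⟩

variable [MetricSpace X] {Ω A B : Set X}

theorem mazDist_le_ediam {K : Set X} (hKΩ : K ⊆ Ω) (hK : IsConnected K)
    (hKA : (K ∩ A).Nonempty) (hKB : (K ∩ B).Nonempty) : mazDist Ω A B ≤ ediam K :=
  iInf₂_le K ⟨hKΩ, hK, hKA, hKB⟩

theorem mazDist_eq_zero_of_mem {x : X} (hxΩ : x ∈ Ω) (hxA : x ∈ A) (hxB : x ∈ B) :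
    mazDist Ω A B = 0 :=
  nonpos_iff_eq_zero.mp <| calc
    mazDist Ω A B ≤ ediam {x} :=
      mazDist_le_ediam (singleton_subset_iff.mpr hxΩ) isConnected_singleton
        ⟨x, rfl, hxA⟩ ⟨x, rfl, hxB⟩
    _ = 0 := ediam_singleton

theorem statement_15_general (hAB : A ⊆ B)
    (hpos : 0 < mazDist Ω (Ω ∩ frontier A) (Ω ∩ frontier B)) :
    Ω ∩ closure A ⊆ interior B := by
  rintro x ⟨hxΩ, hxA⟩
  by_contra hx
  have hxB : x ∈ frontier B := ⟨closure_mono hAB hxA, hx⟩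
  have hxA' : x ∈ frontier A := closure_inter_frontier_subset_frontier hAB ⟨hxA, hxB⟩
  exact hpos.ne' (mazDist_eq_zero_of_mem hxΩ ⟨hxΩ, hxA'⟩ ⟨hxΩ, hxB⟩)

end

/-- if `A ⊆ B ⊊ Ω` are nonempty and the Mazurkiewicz distance between
`Ω ∩ ∂A` and `Ω ∩ ∂B` is positive, then `A` is contained in the interior of `B`;
in particular the interior of `B` is nonempty. -/
theorem statement_15 {X : Type*} [MetricSpace X]
    (Ω : Set X) (hΩdom : IsDomainIn Ω) (hΩbdd : Bornology.IsBounded Ω)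
    (A B : Set X) (hAne : A.Nonempty) (hBne : B.Nonempty)
    (hAB : A ⊆ B) (hBΩ : B ⊆ Ω) (hBprop : B ≠ Ω)
    (hpos : 0 < mazDist Ω (Ω ∩ frontier A) (Ω ∩ frontier B)) :
    A ⊆ interior B ∧ (interior B).Nonempty := by
  have hAint : A ⊆ interior B := fun _ hx =>
    statement_15_general hAB hpos ⟨hBΩ (hAB hx), subset_closure hx⟩
  exact ⟨hAint, hAne.mono hAint⟩

end
end
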